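/- Let (X,d) be a complete separable metric space, p ≥ 1, C > 0 and δ > 0, and let X₁, X₂ ⊆ X be Borel sets with d(x₁,x₂) ≥ δ for all x₁ ∈ X₁ and x₂ ∈ X₂. Let μ, ν be finite Borel measures on X with supp(μ) ∪ supp(ν) ⊆ X₁ ∪ X₂. Then KR_{p,C}(ν, μ) ≥ (min(C, δ)/2)·( |ν(X₁) − μ(X₁)| + |ν(X₂) − μ(X₂)| )^{1/p}. -/

import Mathlib

/-!
Mass that a sub-coupling `π` of `(ν, μ)` leaves inside the diagonal blocks
`D = X₁ × X₁ ∪ X₂ × X₂` is bounded by both marginals, so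
`|ν(Xᵢ) − μ(Xᵢ)| ≤ ν(Xᵢ) + μ(Xᵢ) − 2 π(Xᵢ × Xᵢ)`; summing over `i`, half of the total mass
discrepancy `S` is at most `(m_μ + m_ν)/2 − π(D)`. Each unit of this deficit is paid for: it is
either unmatched, at price `C ^ p`, or matched off `D`, where the distance is at least `δ`.
Hence the cost is at least `min(C, δ) ^ p * S / 2`, and `(1/2) ^ (1/p) ≥ 1/2` because `p ≥ 1`.
-/


open MeasureTheory ENNReal

noncomputable section

variable {X : Type*} [MetricSpace X] [MeasurableSpace X]

/-- `π` is a sub-coupling of `(μ, ν)`: it puts at most `μ`-mass on `A × X` and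
at most `ν`-mass on `X × B`, for all Borel sets `A, B`. -/
def IsSubcoupling (μ ν : Measure X) (π : Measure (X × X)) : Prop :=
  (∀ A : Set X, MeasurableSet A → π (A ×ˢ (Set.univ : Set X)) ≤ μ A) ∧
  (∀ B : Set X, MeasurableSet B → π ((Set.univ : Set X) ×ˢ B) ≤ ν B)

/-- The objective of the `(p,C)`-Kantorovich–Rubinstein problem at a plan `π`:
`∫ d(x,y)^p dπ + C^p ((m_μ + m_ν)/2 − m_π)`. -/
def KRcost (p C : ℝ) (μ ν : Measure X) (π : Measure (X × X)) : ℝ≥0∞ :=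
  (∫⁻ z, ENNReal.ofReal (dist z.1 z.2 ^ p) ∂π) +
    ENNReal.ofReal (C ^ p) * ((μ Set.univ + ν Set.univ) / 2 - π Set.univ)

/-- `KR_{p,C}(μ,ν)^p`, the infimum of the Kantorovich–Rubinstein objective over
all sub-couplings of `(μ, ν)`. -/
def KRpow (p C : ℝ) (μ ν : Measure X) : ℝ≥0∞ :=
  ⨅ (π : Measure (X × X)) (_ : IsSubcoupling μ ν π), KRcost p C μ ν π

/-- The `(p,C)`-Kantorovich–Rubinstein distance. -/
def KR (p C : ℝ) (μ ν : Measure X) : ℝ :=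
  (KRpow p C μ ν).toReal ^ (1 / p)

/-- The topological support of a Borel measure on a metric space. -/
def msupport (μ : Measure X) : Set X :=
  {x : X | ∀ ε : ℝ, 0 < ε → 0 < μ (Metric.ball x ε)}

/-- A measure on a separable metric space is carried by any set containing its support. -/
lemma measure_compl_eq_zero_of_msupport_subset [TopologicalSpace.SeparableSpace X]
    (μ : Measure X) {S : Set X} (h : msupport μ ⊆ S) : μ Sᶜ = 0 := by
  have : SecondCountableTopology X := UniformSpace.secondCountable_of_separable X
  refine measure_null_of_locally_null _ fun x hx => ?_
  have hx' : x ∉ msupport μ := fun hm => hx (h hm)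
  simp only [msupport, Set.mem_ofPred_eq, not_forall, not_lt, nonpos_iff_eq_zero] at hx'
  obtain ⟨ε, hε, h0⟩ := hx'
  exact ⟨Metric.ball x ε, mem_nhdsWithin_of_mem_nhds (Metric.ball_mem_nhds x hε), h0⟩

omit [MetricSpace X] in
lemma IsSubcoupling.ae_fst {μ ν : Measure X} {π : Measure (X × X)} (h : IsSubcoupling μ ν π)
    {S : Set X} (hS : MeasurableSet S) (h0 : μ Sᶜ = 0) : ∀ᵐ z ∂π, z.1 ∈ S := by
  have h1 : π (Sᶜ ×ˢ Set.univ) = 0 := le_antisymm ((h.1 _ hS.compl).trans h0.le) zero_le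
  refine measure_mono_null (fun z hz => ?_) h1
  exact ⟨hz, Set.mem_univ _⟩

omit [MetricSpace X] in
lemma IsSubcoupling.ae_snd {μ ν : Measure X} {π : Measure (X × X)} (h : IsSubcoupling μ ν π)
    {S : Set X} (hS : MeasurableSet S) (h0 : ν Sᶜ = 0) : ∀ᵐ z ∂π, z.2 ∈ S := by
  have h1 : π (Set.univ ×ˢ Sᶜ) = 0 := le_antisymm ((h.2 _ hS.compl).trans h0.le) zero_le
  refine measure_mono_null (fun z hz => ?_) h1
  exact ⟨Set.mem_univ _, hz⟩

omit [MetricSpace X] in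
/-- A diagonal block `A × A` carries at most the smaller of the two masses of `A`. -/
lemma IsSubcoupling.diag_le {μ ν : Measure X} [IsFiniteMeasure μ] [IsFiniteMeasure ν]
    {π : Measure (X × X)} (h : IsSubcoupling μ ν π) {A : Set X} (hA : MeasurableSet A) :
    π (A ×ˢ A) ≠ ∞ ∧ (π (A ×ˢ A)).toReal ≤ (μ A).toReal ∧
      (π (A ×ˢ A)).toReal ≤ (ν A).toReal := by
  have h1 : π (A ×ˢ A) ≤ μ A :=
    (measure_mono (Set.prod_mono subset_rfl (Set.subset_univ _))).trans (h.1 A hA)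
  have h2 : π (A ×ˢ A) ≤ ν A :=
    (measure_mono (Set.prod_mono (Set.subset_univ _) subset_rfl)).trans (h.2 A hA)
  exact ⟨ne_top_of_le_ne_top (measure_ne_top _ _) h1,
    ENNReal.toReal_mono (measure_ne_top _ _) h1, ENNReal.toReal_mono (measure_ne_top _ _) h2⟩

omit [MetricSpace X] in
lemma toReal_univ_eq_add (μ : Measure X) [IsFiniteMeasure μ] {A B : Set X}
    (hAB : Disjoint A B) (hB : MeasurableSet B) (h0 : μ (A ∪ B)ᶜ = 0) :
    (μ Set.univ).toReal = (μ A).toReal + (μ B).toReal := by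
  rw [← ENNReal.toReal_add (measure_ne_top _ _) (measure_ne_top _ _), ← measure_union hAB hB,
    measure_congr (ae_eq_univ.2 h0)]

lemma KRpow_ne_top (p C : ℝ) (μ ν : Measure X) [IsFiniteMeasure μ] [IsFiniteMeasure ν] :
    KRpow p C μ ν ≠ ∞ := by
  have h0 : IsSubcoupling μ ν 0 := ⟨fun _ _ => by simp, fun _ _ => by simp⟩
  refine ne_top_of_le_ne_top ?_ (iInf₂_le (0 : Measure (X × X)) h0)
  simp only [KRcost, lintegral_zero_measure, zero_add, Measure.coe_zero, Pi.zero_apply, tsub_zero]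
  exact ENNReal.mul_ne_top ENNReal.ofReal_ne_top (ENNReal.div_ne_top
    (ENNReal.add_ne_top.2 ⟨measure_ne_top _ _, measure_ne_top _ _⟩) two_ne_zero)

/-- The lower bound for the cost of a single sub-coupling, before taking `p`-th roots. -/
lemma le_KRcost [BorelSpace X]
    {p C δ : ℝ} (hp : 1 ≤ p) (hC : 0 < C) (hδ : 0 < δ)
    {X₁ X₂ : Set X} (hX₁ : MeasurableSet X₁) (hX₂ : MeasurableSet X₂)
    (hsep : ∀ x₁ ∈ X₁, ∀ x₂ ∈ X₂, δ ≤ dist x₁ x₂)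
    {μ ν : Measure X} [IsFiniteMeasure μ] [IsFiniteMeasure ν]
    (hμ : μ (X₁ ∪ X₂)ᶜ = 0) (hν : ν (X₁ ∪ X₂)ᶜ = 0)
    {π : Measure (X × X)} (hπ : IsSubcoupling ν μ π) :
    ENNReal.ofReal (min C δ ^ p) * ENNReal.ofReal
      ((|(ν X₁).toReal - (μ X₁).toReal| + |(ν X₂).toReal - (μ X₂).toReal|) / 2) ≤
      KRcost p C ν μ π := by
  have hp0 : 0 ≤ p := by linarith
  have hk : 0 ≤ min C δ := (lt_min hC hδ).le
  have hdisj : Disjoint X₁ X₂ := by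
    refine Set.disjoint_left.2 fun x h1 h2 => ?_
    have := hsep x h1 x h2
    rw [dist_self] at this
    linarith
  set S := |(ν X₁).toReal - (μ X₁).toReal| + |(ν X₂).toReal - (μ X₂).toReal| with hS
  set D : Set (X × X) := X₁ ×ˢ X₁ ∪ X₂ ×ˢ X₂ with hD
  set k := ENNReal.ofReal (min C δ ^ p) with hk_def
  have hDm : MeasurableSet D := (hX₁.prod hX₁).union (hX₂.prod hX₂)
  have hπD : π D = π (X₁ ×ˢ X₁) + π (X₂ ×ˢ X₂) :=
    measure_union (Set.disjoint_prod.2 (Or.inl hdisj)) (hX₂.prod hX₂)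
  obtain ⟨hf1, ha1, hb1⟩ := hπ.diag_le hX₁
  obtain ⟨hf2, ha2, hb2⟩ := hπ.diag_le hX₂
  have hDfin : π D ≠ ∞ := by rw [hπD]; exact ENNReal.add_ne_top.2 ⟨hf1, hf2⟩
  have hmass : π D + ENNReal.ofReal (S / 2) ≤ (ν Set.univ + μ Set.univ) / 2 := by
    have hfin : (ν Set.univ + μ Set.univ) / 2 ≠ ∞ := ENNReal.div_ne_top
      (ENNReal.add_ne_top.2 ⟨measure_ne_top _ _, measure_ne_top _ _⟩) two_ne_zero
    rw [← ENNReal.toReal_le_toReal (ENNReal.add_ne_top.2 ⟨hDfin, ENNReal.ofReal_ne_top⟩) hfin,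
      ENNReal.toReal_add hDfin ENNReal.ofReal_ne_top, ENNReal.toReal_ofReal (by positivity),
      ENNReal.toReal_div, ENNReal.toReal_add (measure_ne_top _ _) (measure_ne_top _ _),
      hπD, ENNReal.toReal_add hf1 hf2, toReal_univ_eq_add ν hdisj hX₂ hν,
      toReal_univ_eq_add μ hdisj hX₂ hμ, ENNReal.toReal_ofNat]
    have e1 : |(ν X₁).toReal - (μ X₁).toReal| ≤
        (ν X₁).toReal + (μ X₁).toReal - 2 * (π (X₁ ×ˢ X₁)).toReal :=
      abs_le.2 ⟨by linarith, by linarith⟩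
    have e2 : |(ν X₂).toReal - (μ X₂).toReal| ≤
        (ν X₂).toReal + (μ X₂).toReal - 2 * (π (X₂ ×ˢ X₂)).toReal :=
      abs_le.2 ⟨by linarith, by linarith⟩
    linarith
  have hint : k * π Dᶜ ≤ ∫⁻ z, ENNReal.ofReal (dist z.1 z.2 ^ p) ∂π := by
    rw [← setLIntegral_const]
    refine le_trans (lintegral_mono_ae ?_) (setLIntegral_le_lintegral Dᶜ _)
    refine (ae_restrict_iff' hDm.compl).2 ?_
    filter_upwards [hπ.ae_fst (hX₁.union hX₂) hν, hπ.ae_snd (hX₁.union hX₂) hμ] with z h1 h2 hz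
    have hd : δ ≤ dist z.1 z.2 := by
      rcases h1 with h1 | h1 <;> rcases h2 with h2 | h2
      · exact absurd (Or.inl ⟨h1, h2⟩) hz
      · exact hsep _ h1 _ h2
      · rw [dist_comm]; exact hsep _ h2 _ h1
      · exact absurd (Or.inr ⟨h1, h2⟩) hz
    exact ENNReal.ofReal_le_ofReal
      (Real.rpow_le_rpow hk ((min_le_right _ _).trans hd) hp0)
  have hkC : k ≤ ENNReal.ofReal (C ^ p) :=
    ENNReal.ofReal_le_ofReal (Real.rpow_le_rpow hk (min_le_left _ _) hp0)
  have hkD : k * π D ≠ ∞ := ENNReal.mul_ne_top ENNReal.ofReal_ne_top hDfin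
  -- Adding the finite quantity `k * π D` to both sides avoids truncated subtraction.
  refine (ENNReal.add_le_add_iff_left hkD).1 ?_
  calc k * π D + k * ENNReal.ofReal (S / 2)
      = k * (π D + ENNReal.ofReal (S / 2)) := (mul_add _ _ _).symm
    _ ≤ k * ((ν Set.univ + μ Set.univ) / 2) := by gcongr
    _ ≤ k * (((ν Set.univ + μ Set.univ) / 2 - π Set.univ) + π Set.univ) := by
        gcongr; exact le_tsub_add
    _ = k * π D + (k * π Dᶜ + k * ((ν Set.univ + μ Set.univ) / 2 - π Set.univ)) := by
        rw [← measure_add_measure_compl hDm]; ring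
    _ ≤ k * π D + KRcost p C ν μ π := by
        unfold KRcost; gcongr

/-- Lower bound via mass estimation of separated components: if the
supports of `μ` and `ν` lie in `X₁ ∪ X₂` with `d(X₁, X₂) ≥ δ`, then
`KR_{p,C}(ν,μ) ≥ (min(C,δ)/2)·(|ν(X₁) − μ(X₁)| + |ν(X₂) − μ(X₂)|)^{1/p}`. -/
theorem statement16 [CompleteSpace X] [TopologicalSpace.SeparableSpace X] [BorelSpace X]
    (p C δ : ℝ) (hp : 1 ≤ p) (hC : 0 < C) (hδ : 0 < δ)
    (X₁ X₂ : Set X) (hX₁ : MeasurableSet X₁) (hX₂ : MeasurableSet X₂)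
    (hsep : ∀ x₁ ∈ X₁, ∀ x₂ ∈ X₂, δ ≤ dist x₁ x₂)
    (μ ν : Measure X) [IsFiniteMeasure μ] [IsFiniteMeasure ν]
    (hsupp : msupport μ ∪ msupport ν ⊆ X₁ ∪ X₂) :
    min C δ / 2 *
        (|(ν X₁).toReal - (μ X₁).toReal| + |(ν X₂).toReal - (μ X₂).toReal|) ^ (1 / p) ≤
      KR p C ν μ := by
  have hp0 : 0 < p := by linarith
  have hk : 0 ≤ min C δ := (lt_min hC hδ).le
  have hμ := measure_compl_eq_zero_of_msupport_subset μ (Set.subset_union_left.trans hsupp)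
  have hν := measure_compl_eq_zero_of_msupport_subset ν (Set.subset_union_right.trans hsupp)
  set S := |(ν X₁).toReal - (μ X₁).toReal| + |(ν X₂).toReal - (μ X₂).toReal| with hS
  have hS0 : 0 ≤ S := by positivity
  have hkp : 0 ≤ min C δ ^ p := Real.rpow_nonneg hk p
  have hle : min C δ ^ p * (S / 2) ≤ (KRpow p C ν μ).toReal := by
    rw [← ENNReal.ofReal_le_iff_le_toReal (KRpow_ne_top p C ν μ), ENNReal.ofReal_mul hkp]
    exact le_iInf₂ fun π hπ => le_KRcost hp hC hδ hX₁ hX₂ hsep hμ hν hπ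
  have hhalf : (1 / 2 : ℝ) ≤ (1 / 2 : ℝ) ^ (1 / p) := by
    have h := Real.rpow_le_rpow_of_exponent_ge (x := 1 / 2) (by norm_num) (by norm_num)
      ((div_le_one hp0).2 hp)
    rwa [Real.rpow_one] at h
  calc min C δ / 2 * S ^ (1 / p)
      = min C δ * (S ^ (1 / p) * (1 / 2)) := by ring
    _ ≤ min C δ * (S ^ (1 / p) * (1 / 2 : ℝ) ^ (1 / p)) := by gcongr
    _ = (min C δ ^ p * (S / 2)) ^ (1 / p) := by
        rw [← Real.mul_rpow hS0 (by norm_num), Real.mul_rpow hkp (by positivity),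
          ← Real.rpow_mul hk, mul_one_div_cancel hp0.ne', Real.rpow_one, mul_one_div]
    _ ≤ KR p C ν μ := Real.rpow_le_rpow (by positivity) hle (by positivity)
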